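/- arXiv:1712.09483 — 7 statements merged into one kernel-verified Lean document; each statement's English description precedes it below -/
import Mathlib

section
/- Let η > 1 and let A, S be real symmetric p×p matrices such that every eigenvalue of A lies in the interval [η⁻¹, η]. Suppose S = U Λ Uᵀ where U is an orthogonal matrix and Λ = diag(λ₁, ..., λ_p) is real diagonal, and define P = U Λ* Uᵀ where Λ* = diag(clip_η(λ₁), ..., clip_η(λ_p)). Then ‖A − P‖₂ ≤ 2‖A − S‖₂ and ‖A − P‖_F ≤ 2‖A − S‖_F. -/
/-!
By the triangle inequality through `S`, both bounds follow from `‖S - P‖ ≤ ‖A - S‖`, where `P` is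
the clipped matrix. Both norms are invariant under orthogonal conjugation, so this compares the
diagonal matrix `diag(λᵢ - clip λᵢ)` with `D = Uᵀ (A - S) U`. The diagonal entries of `Uᵀ A U` are
Rayleigh quotients of `A`, hence lie in `[η⁻¹, η]` (`rayleigh_mem_Icc`). Since `clip λᵢ` is the point
of that interval closest to `λᵢ`, it follows that `|λᵢ - clip λᵢ| ≤ |Dᵢᵢ|` (`abs_sub_clip_le_conj`). Finally
`diag(D)` has norm at most that of `D`, in the operator norm (`abs_apply_le_opNorm`) and in the
Frobenius norm.
-/

open scoped BigOperators
open Matrix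

/-- The `ℓ₂ → ℓ₂` operator norm of a real square matrix. -/
noncomputable def opNorm {p : ℕ} (M : Matrix (Fin p) (Fin p) ℝ) : ℝ :=
  ‖LinearMap.toContinuousLinearMap (Matrix.toEuclideanLin M)‖

/-- The Frobenius norm of a real square matrix. -/
noncomputable def frobNorm {p : ℕ} (M : Matrix (Fin p) (Fin p) ℝ) : ℝ :=
  Real.sqrt (∑ i, ∑ j, (M i j) ^ 2)

/-- Clipping a real number to the interval `[η⁻¹, η]`. -/
noncomputable def clip (η t : ℝ) : ℝ := min (max t η⁻¹) η

/-- The clipped value is the point of `[η⁻¹, η]` closest to `t`. -/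
lemma abs_sub_clip_le {η t a : ℝ} (ha : a ∈ Set.Icc η⁻¹ η) :
    |t - clip η t| ≤ |t - a| := by
  obtain ⟨h1, h2⟩ := ha
  unfold clip
  rcases le_total t η⁻¹ with h | h
  · rw [max_eq_right h, min_eq_left (h1.trans h2), abs_sub_comm, abs_sub_comm t,
      abs_of_nonneg (by linarith), abs_of_nonneg (by linarith)]
    linarith
  · rw [max_eq_left h]
    rcases le_total t η with h' | h'
    · rw [min_eq_left h']
      simp
    · rw [min_eq_right h', abs_of_nonneg (by linarith), abs_of_nonneg (by linarith)]
      linarith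

/-- The diagonal entries of `Uᵀ A U` are Rayleigh quotients of `A`: with `W = Vᵀ U`, where `V`
diagonalizes `A`, they are averages of the eigenvalues with weights `(W j i)²`. -/
lemma rayleigh_mem_Icc {p : ℕ} {a b : ℝ} {A U : Matrix (Fin p) (Fin p) ℝ}
    (hA : A.IsHermitian) (hAeig : ∀ i, hA.eigenvalues i ∈ Set.Icc a b)
    (hU : Uᵀ * U = 1) (i : Fin p) : (Uᵀ * A * U) i i ∈ Set.Icc a b := by
  set V : Matrix (Fin p) (Fin p) ℝ := hA.eigenvectorUnitary.1
  have hVV : V * Vᵀ = 1 := Unitary.coe_mul_star_self hA.eigenvectorUnitary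
  have hspec : A = V * diagonal hA.eigenvalues * Vᵀ := hA.spectral_theorem
  set W := Vᵀ * U with hW
  have hWW : Wᵀ * W = 1 := by
    rw [hW, transpose_mul, transpose_transpose, Matrix.mul_assoc, ← Matrix.mul_assoc V, hVV,
      Matrix.one_mul, hU]
  have hconj : Uᵀ * A * U = Wᵀ * (diagonal hA.eigenvalues * W) := by
    conv_lhs => rw [hspec]
    rw [hW, transpose_mul, transpose_transpose]
    simp only [Matrix.mul_assoc]
  have hweights : ∑ j, W j i ^ 2 = 1 := by
    have h := congrFun (congrFun hWW i) i
    simpa [Matrix.mul_apply, sq] using h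
  have hval : (Uᵀ * A * U) i i = ∑ j, hA.eigenvalues j * W j i ^ 2 := by
    rw [hconj, Matrix.mul_apply]
    refine Finset.sum_congr rfl fun j _ => ?_
    rw [diagonal_mul, transpose_apply]
    ring
  rw [hval]
  constructor
  · calc a = ∑ j, a * W j i ^ 2 := by rw [← Finset.mul_sum, hweights, mul_one]
      _ ≤ _ := Finset.sum_le_sum fun j _ =>
        mul_le_mul_of_nonneg_right (hAeig j).1 (sq_nonneg _)
  · calc _ ≤ ∑ j, b * W j i ^ 2 := Finset.sum_le_sum fun j _ =>
          mul_le_mul_of_nonneg_right (hAeig j).2 (sq_nonneg _)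
      _ = b := by rw [← Finset.mul_sum, hweights, mul_one]

lemma abs_sub_clip_le_conj {p : ℕ} {η : ℝ} {A U : Matrix (Fin p) (Fin p) ℝ} {l : Fin p → ℝ}
    (hA : A.IsHermitian) (hAeig : ∀ i, hA.eigenvalues i ∈ Set.Icc η⁻¹ η)
    (hU : Uᵀ * U = 1) (i : Fin p) :
    |l i - clip η (l i)| ≤ |(Uᵀ * (A - U * diagonal l * Uᵀ) * U) i i| := by
  have hconj : Uᵀ * (A - U * diagonal l * Uᵀ) * U = Uᵀ * A * U - diagonal l := by
    have h : Uᵀ * (U * diagonal l * Uᵀ) * U = (Uᵀ * U) * diagonal l * (Uᵀ * U) := by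
      simp only [Matrix.mul_assoc]
    rw [Matrix.mul_sub, Matrix.sub_mul, h, hU, Matrix.one_mul, Matrix.mul_one]
  rw [hconj, Matrix.sub_apply, diagonal_apply_eq, abs_sub_comm _ (l i)]
  exact abs_sub_clip_le (rayleigh_mem_Icc hA hAeig hU i)

section OperatorNorm

open scoped Matrix.Norms.L2Operator

lemma opNorm_eq_norm {p : ℕ} (M : Matrix (Fin p) (Fin p) ℝ) : opNorm M = ‖M‖ := rfl

lemma opNorm_sub_le {p : ℕ} (A S P : Matrix (Fin p) (Fin p) ℝ) :
    opNorm (A - P) ≤ opNorm (A - S) + opNorm (S - P) := by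
  simp only [opNorm_eq_norm]
  exact norm_sub_le_norm_sub_add_norm_sub A S P

lemma opNorm_conj {p : ℕ} {U : Matrix (Fin p) (Fin p) ℝ} (hU : Uᵀ * U = 1)
    (M : Matrix (Fin p) (Fin p) ℝ) : opNorm (U * M * Uᵀ) = opNorm M := by
  have hmem : U ∈ unitary (Matrix (Fin p) (Fin p) ℝ) :=
    Unitary.mem_iff.2 ⟨hU, mul_eq_one_comm.1 hU⟩
  have hmem' : Uᵀ ∈ unitary (Matrix (Fin p) (Fin p) ℝ) := Unitary.star_mem hmem
  simp only [opNorm_eq_norm]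
  rw [CStarRing.norm_mul_mem_unitary _ hmem', CStarRing.norm_mem_unitary_mul _ hmem]

/-- `M i i` is a coordinate of the image under `M` of the `i`-th basis vector. -/
lemma abs_apply_le_opNorm {p : ℕ} (M : Matrix (Fin p) (Fin p) ℝ) (i : Fin p) :
    |M i i| ≤ opNorm M := by
  rw [opNorm_eq_norm]
  have h := l2_opNorm_mulVec M (EuclideanSpace.single i (1 : ℝ))
  have h' := PiLp.norm_apply_le
    ((EuclideanSpace.equiv (Fin p) ℝ).symm (M *ᵥ (EuclideanSpace.single i (1 : ℝ)))) i
  have h'' := h'.trans h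
  simpa using h''

lemma opNorm_diagonal_le {p : ℕ} {v : Fin p → ℝ} {M : Matrix (Fin p) (Fin p) ℝ}
    (h : ∀ i, |v i| ≤ |M i i|) : opNorm (diagonal v) ≤ opNorm M := by
  have h0 : 0 ≤ opNorm M := norm_nonneg M
  rw [opNorm_eq_norm (diagonal v), l2_opNorm_diagonal]
  exact (pi_norm_le_iff_of_nonneg h0).2 fun i => (h i).trans (abs_apply_le_opNorm M i)

end OperatorNorm

section FrobeniusNorm

open scoped Matrix.Norms.Frobenius

lemma frobNorm_eq_norm {p : ℕ} (M : Matrix (Fin p) (Fin p) ℝ) : frobNorm M = ‖M‖ := by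
  simp [frobNorm, frobenius_norm_def, Real.sqrt_eq_rpow]

lemma frobNorm_sub_le {p : ℕ} (A S P : Matrix (Fin p) (Fin p) ℝ) :
    frobNorm (A - P) ≤ frobNorm (A - S) + frobNorm (S - P) := by
  simp only [frobNorm_eq_norm]
  exact norm_sub_le_norm_sub_add_norm_sub A S P

end FrobeniusNorm

lemma frobNorm_eq_sqrt_trace {p : ℕ} (M : Matrix (Fin p) (Fin p) ℝ) :
    frobNorm M = √(Mᵀ * M).trace := by
  rw [frobNorm, Finset.sum_comm]
  simp [trace, Matrix.mul_apply, sq]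

lemma frobNorm_conj {p : ℕ} {U : Matrix (Fin p) (Fin p) ℝ} (hU : Uᵀ * U = 1)
    (M : Matrix (Fin p) (Fin p) ℝ) : frobNorm (U * M * Uᵀ) = frobNorm M := by
  have h : (U * M * Uᵀ)ᵀ * (U * M * Uᵀ) = U * (Mᵀ * (Uᵀ * U) * M * Uᵀ) := by
    simp only [transpose_mul, transpose_transpose, Matrix.mul_assoc]
  rw [frobNorm_eq_sqrt_trace, frobNorm_eq_sqrt_trace, h, hU, trace_mul_comm, Matrix.mul_assoc, hU,
    Matrix.mul_one, Matrix.mul_one]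

lemma frobNorm_diagonal_le {p : ℕ} {v : Fin p → ℝ} {M : Matrix (Fin p) (Fin p) ℝ}
    (h : ∀ i, |v i| ≤ |M i i|) : frobNorm (diagonal v) ≤ frobNorm M := by
  refine Real.sqrt_le_sqrt (Finset.sum_le_sum fun i _ => Finset.sum_le_sum fun j _ => ?_)
  rcases eq_or_ne i j with rfl | hij
  · rw [diagonal_apply_eq]
    exact sq_le_sq.2 (h i)
  · rw [diagonal_apply_ne _ hij, zero_pow two_ne_zero]
    positivity

theorem stmt0 {p : ℕ} (η : ℝ) (hη : 1 < η)
    (A S U : Matrix (Fin p) (Fin p) ℝ) (l : Fin p → ℝ)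
    (hA : A.IsHermitian) (hS : S.IsHermitian)
    (hAeig : ∀ i, hA.eigenvalues i ∈ Set.Icc η⁻¹ η)
    (hU : Uᵀ * U = 1)
    (hSdef : S = U * Matrix.diagonal l * Uᵀ) :
    opNorm (A - U * Matrix.diagonal (fun i => clip η (l i)) * Uᵀ) ≤ 2 * opNorm (A - S) ∧
    frobNorm (A - U * Matrix.diagonal (fun i => clip η (l i)) * Uᵀ) ≤ 2 * frobNorm (A - S) := by
  have hUt : Uᵀᵀ * Uᵀ = 1 := by rw [transpose_transpose, mul_eq_one_comm.1 hU]
  have hdiff : S - U * diagonal (fun i => clip η (l i)) * Uᵀ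
      = U * diagonal (fun i => l i - clip η (l i)) * Uᵀ := by
    rw [hSdef, ← Matrix.sub_mul, ← Matrix.mul_sub, diagonal_sub]
  have hentry : ∀ i, |l i - clip η (l i)| ≤ |(Uᵀ * (A - S) * U) i i| := fun i => by
    rw [hSdef]
    exact abs_sub_clip_le_conj hA hAeig hU i
  constructor
  · have htri := opNorm_sub_le A S (U * diagonal (fun i => clip η (l i)) * Uᵀ)
    have hconj := opNorm_conj hUt (A - S)
    have hle := opNorm_diagonal_le hentry
    rw [transpose_transpose] at hconj
    rw [hdiff, opNorm_conj hU] at htri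
    linarith
  · have htri := frobNorm_sub_le A S (U * diagonal (fun i => clip η (l i)) * Uᵀ)
    have hconj := frobNorm_conj hUt (A - S)
    have hle := frobNorm_diagonal_le hentry
    rw [transpose_transpose] at hconj
    rw [hdiff, frobNorm_conj hU] at htri
    linarith
end

section
/- Let η > 1 and let A = [a_{ij}] be a real p×p matrix such that η⁻¹ ≤ (Σ_{j=1}^p a_{ij}²)^{1/2} ≤ η for every row index i. Let w₁, ..., w_p be nonnegative reals, W = diag(w₁, ..., w_p), and W_η = diag(clip_η(w₁), ..., clip_η(w_p)). Then ‖W − W_η‖_F ≤ ‖A − W‖_F. -/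
/-!
The inequality holds row by row. Let `r` be the Euclidean norm of row `i` of `A`. Since
`A i i ≤ r` and `0 ≤ w i`, the squared distance from that row to `w i • e_i` is
`r² - 2 * w i * A i i + (w i)² ≥ (r - w i)²`. As `r` lies in `[η⁻¹, η]`, and `clip η (w i)` is the
point of that interval nearest to `w i`, this is at least `(w i - clip η (w i))²`.
-/

open scoped BigOperators
open Matrix

/-- `clip η t` is a nearest point to `t` in `[η⁻¹, η]`. -/
lemma sq_sub_clip_le {η t r : ℝ} (h1 : η⁻¹ ≤ r) (h2 : r ≤ η) :
    (t - clip η t) ^ 2 ≤ (t - r) ^ 2 := by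
  unfold clip
  rcases le_total t η⁻¹ with h | h
  · rw [max_eq_right h, min_eq_left (h1.trans h2)]
    nlinarith
  · rw [max_eq_left h]
    rcases le_total t η with h' | h'
    · rw [min_eq_left h']
      nlinarith [sq_nonneg (t - r)]
    · rw [min_eq_right h']
      nlinarith

theorem stmt2 {p : ℕ} (η : ℝ) (hη : 1 < η)
    (A : Matrix (Fin p) (Fin p) ℝ)
    (hA : ∀ i : Fin p,
      η⁻¹ ≤ Real.sqrt (∑ j, (A i j) ^ 2) ∧ Real.sqrt (∑ j, (A i j) ^ 2) ≤ η)
    (w : Fin p → ℝ) (hw : ∀ i, 0 ≤ w i) :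
    frobNorm (Matrix.diagonal w - Matrix.diagonal fun i => clip η (w i)) ≤
      frobNorm (A - Matrix.diagonal w) := by
  unfold frobNorm
  apply Real.sqrt_le_sqrt
  refine Finset.sum_le_sum fun i _ => ?_
  obtain ⟨h1, h2⟩ := hA i
  set r := Real.sqrt (∑ j, (A i j) ^ 2) with hr
  have hnn : 0 ≤ ∑ j, (A i j) ^ 2 := Finset.sum_nonneg fun j _ => sq_nonneg _
  have hr2 : r ^ 2 = ∑ j, (A i j) ^ 2 := Real.sq_sqrt hnn
  have hdiag : A i i ≤ r :=
    Real.le_sqrt_of_sq_le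
      (Finset.single_le_sum (f := fun j => (A i j) ^ 2) (fun j _ => sq_nonneg _)
        (Finset.mem_univ i))
  have hL : ∑ j, ((Matrix.diagonal w - Matrix.diagonal fun i => clip η (w i)) i j) ^ 2
      = (w i - clip η (w i)) ^ 2 := by
    rw [Finset.sum_eq_single i]
    · simp
    · intro j _ hj
      simp [Matrix.diagonal_apply_ne' _ hj]
    · simp
  have hR : ∑ j, ((A - Matrix.diagonal w) i j) ^ 2 = r ^ 2 - 2 * w i * A i i + w i ^ 2 := by
    have key : ∀ j, ((A - Matrix.diagonal w) i j) ^ 2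
        = (A i j) ^ 2 + if i = j then - 2 * w i * A i i + w i ^ 2 else 0 := by
      intro j
      by_cases hj : i = j
      · subst hj
        simp
        ring
      · simp [hj]
    simp_rw [key, Finset.sum_add_distrib, Finset.sum_ite_eq, hr2]
    simp
    ring
  rw [hL, hR]
  nlinarith [sq_sub_clip_le (t := w i) h1 h2, mul_le_mul_of_nonneg_left hdiag (hw i)]
end

section
/- Let η > 1 and let Ω be a real symmetric p×p matrix all of whose eigenvalues lie in [η⁻¹, η]. Suppose Ω = Lᵀ D⁻¹ L, where L is lower triangular with unit diagonal (L_{ii} = 1 and L_{ij} = 0 for j > i) and D = diag(d₁, ..., d_p) with every d_i > 0. Then η⁻¹ ≤ d_i ≤ η for every i. -/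
/-!
The eigenvalue bounds say `η⁻¹ • 1 ≤ Ω ≤ η • 1` in the Loewner order, so `xᵀ Ω x` lies between
`η⁻¹ ‖x‖²` and `η ‖x‖²`; on the other hand `xᵀ Ω x = ∑ k, (L x)ₖ² / dₖ`.

* Lower bound on `dᵢ`: for `x = eᵢ` the `i`-th term of the sum is `1 / dᵢ`, so `1 / dᵢ ≤ η`.
* Upper bound on `dᵢ`: for `x = L⁻¹ eᵢ` the sum equals `1 / dᵢ`, and forward substitution gives
  `xᵢ = 1`, so `η⁻¹ ≤ η⁻¹ ‖x‖² ≤ 1 / dᵢ`.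
-/

open scoped BigOperators
open Matrix

open scoped MatrixOrder in
lemma quadForm_bounds {n : Type*} [Fintype n] [DecidableEq n] {a b : ℝ}
    {A : Matrix n n ℝ} (hA : A.IsHermitian)
    (heig : ∀ i, hA.eigenvalues i ∈ Set.Icc a b) (x : n → ℝ) :
    a * (x ⬝ᵥ x) ≤ x ⬝ᵥ A *ᵥ x ∧ x ⬝ᵥ A *ᵥ x ≤ b * (x ⬝ᵥ x) := by
  have hspec : ∀ r ∈ spectrum ℝ A, r ∈ Set.Icc a b := by
    rw [hA.spectrum_real_eq_range_eigenvalues]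
    rintro _ ⟨i, rfl⟩
    exact heig i
  have h1 : algebraMap ℝ _ a ≤ A :=
    (algebraMap_le_iff_le_spectrum (ha := hA)).2 fun r hr => (hspec r hr).1
  have h2 : A ≤ algebraMap ℝ _ b :=
    (le_algebraMap_iff_spectrum_le (ha := hA)).2 fun r hr => (hspec r hr).2
  rw [Matrix.le_iff] at h1 h2
  have h3 := h1.dotProduct_mulVec_nonneg x
  have h4 := h2.dotProduct_mulVec_nonneg x
  simp only [Algebra.algebraMap_eq_smul_one, sub_mulVec, smul_mulVec, one_mulVec,
    dotProduct_sub, dotProduct_smul, star_trivial, smul_eq_mul] at h3 h4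
  constructor <;> linarith

lemma quadForm_decomp {n : Type*} [Fintype n] [DecidableEq n]
    (L : Matrix n n ℝ) (c : n → ℝ) (x : n → ℝ) :
    x ⬝ᵥ (Lᵀ * diagonal c * L) *ᵥ x = ∑ k, c k * (L *ᵥ x) k ^ 2 := by
  rw [← mulVec_mulVec, ← mulVec_mulVec, dotProduct_mulVec, vecMul_transpose]
  simp only [dotProduct, mulVec_diagonal]
  exact Finset.sum_congr rfl fun k _ => by ring

/-- Forward substitution: the solution of `L x = eᵢ` vanishes before `i` and equals `1` at `i`. -/
lemma solution_apply_self {p : ℕ} {L : Matrix (Fin p) (Fin p) ℝ}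
    (hLdiag : ∀ i, L i i = 1) (hLlow : ∀ i j : Fin p, i < j → L i j = 0)
    {x : Fin p → ℝ} {i : Fin p} (hx : L *ᵥ x = Pi.single i 1) : x i = 1 := by
  have row : ∀ j, (∀ k < j, x k = 0) → (L *ᵥ x) j = x j := by
    intro j hj
    rw [mulVec, dotProduct, Finset.sum_eq_single j]
    · rw [hLdiag, one_mul]
    · intro k _ hk
      rcases lt_or_gt_of_ne hk with h | h
      · rw [hj k h, mul_zero]
      · rw [hLlow j k h, zero_mul]
    · simp
  have hzero : ∀ j, j < i → x j = 0 := by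
    intro j
    induction j using WellFoundedLT.induction with
    | ind j ih =>
      intro hj
      rw [← row j fun k hk => ih k hk (hk.trans hj), hx, Pi.single_eq_of_ne hj.ne]
  rw [← row i hzero, hx, Pi.single_eq_same]

theorem stmt3 {p : ℕ} (η : ℝ) (hη : 1 < η)
    (Ω L : Matrix (Fin p) (Fin p) ℝ) (d : Fin p → ℝ)
    (hΩ : Ω.IsHermitian)
    (heig : ∀ i, hΩ.eigenvalues i ∈ Set.Icc η⁻¹ η)
    (hLdiag : ∀ i, L i i = 1)
    (hLlow : ∀ i j : Fin p, i < j → L i j = 0)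
    (hd : ∀ i, 0 < d i)
    (hdecomp : Ω = Lᵀ * Matrix.diagonal (fun i => (d i)⁻¹) * L) :
    ∀ i, d i ∈ Set.Icc η⁻¹ η := by
  intro i
  have hη0 : 0 < η := by linarith
  have hform : ∀ x, x ⬝ᵥ Ω *ᵥ x = ∑ k, (d k)⁻¹ * (L *ᵥ x) k ^ 2 := by
    intro x
    rw [hdecomp, quadForm_decomp]
  constructor
  · have h := (quadForm_bounds hΩ heig (Pi.single i 1)).2
    rw [hform] at h
    have hterm := Finset.single_le_sum
      (f := fun k => (d k)⁻¹ * (L *ᵥ Pi.single i 1) k ^ 2)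
      (fun k _ => mul_nonneg (inv_nonneg.2 (hd k).le) (sq_nonneg _)) (Finset.mem_univ i)
    simp [hLdiag] at h hterm
    exact inv_le_of_inv_le₀ (hd i) (hterm.trans h)
  · have hdet : IsUnit L.det := by
      rw [det_of_isLowerTriangular L fun i j hij => hLlow i j hij]
      simp [hLdiag]
    obtain ⟨x, hx⟩ : ∃ x, L *ᵥ x = Pi.single i 1 :=
      ⟨L⁻¹ *ᵥ Pi.single i 1, by rw [mulVec_mulVec, mul_nonsing_inv _ hdet, one_mulVec]⟩
    have hxi := solution_apply_self hLdiag hLlow hx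
    have h := (quadForm_bounds hΩ heig x).1
    have hsum : x ⬝ᵥ Ω *ᵥ x = (d i)⁻¹ := by
      rw [hform, hx, Finset.sum_eq_single i] <;> simp +contextual
    have hnorm : 1 ≤ x ⬝ᵥ x := by
      have := Finset.single_le_sum (f := fun k => x k * x k)
        (fun k _ => mul_self_nonneg _) (Finset.mem_univ i)
      simpa [hxi, dotProduct] using this
    rw [hsum] at h
    exact (inv_le_inv₀ hη0 (hd i)).1
      ((le_mul_of_one_le_right (inv_nonneg.2 hη0.le) hnorm).trans h)
end

section
/- Let α > 0, M > 0 and η > 1. There exists a constant C > 0, depending only on α, M and η, such that the following holds: for every p ≥ 1, every strictly lower triangular real p×p matrix A = [a_{ij}] satisfying |a_{ij}| ≤ M (i−j)^{−α−1} for all i > j, and every diagonal matrix D = diag(d₁, ..., d_p) with d_i ∈ [η⁻¹, η], the matrix Ω = (I − A)ᵀ D⁻¹ (I − A) satisfies ‖Ω*_k − Ω‖₂² ≤ C k^{−2α} for every k ∈ {1, ..., p}. -/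
/-!
The entries of `Ω = (I - A)ᵀ D⁻¹ (I - A)` inherit the polynomial decay of the entries of `A`.
With `decay α n = max(1, n)^(-α-1)`, the entries of `I - A` are at most `(M + 1) * decay α (i - j)`
below the diagonal and vanish above it. In `Ω i j = ∑ l, b l i * (d l)⁻¹ * b l j` only `l ≥ max i j`
contribute; for these the larger of `l - i`, `l - j` is at least `|i - j|`, so summability of
`decay α` gives `|Ω i j| ≤ K * decay α |i - j|` (`abs_omega_le`).

Tapering leaves the entries with `|i - j| ≤ k` unchanged and changes the others by at most their own
size, so all row and column sums of `|Ω*_k - Ω|` are at most `2 K ∑_{n > k} n^(-α-1)`, which is at most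
`2 K k^(-α) / α` by telescoping (`sum_tail_le`). Schur's test (`opNorm_le_of_sums`) turns this into
a bound on the operator norm.
-/

open scoped BigOperators
open Matrix

/-- The tapered matrix `Ω*_k` with weights
`m_{ij} = max{0, 2 − |i−j|/k} − max{0, 1 − |i−j|/k}`. -/
noncomputable def taper {p : ℕ} (k : ℕ) (Ω : Matrix (Fin p) (Fin p) ℝ) :
    Matrix (Fin p) (Fin p) ℝ :=
  Matrix.of fun i j =>
    (max 0 (2 - (((i : ℤ) - (j : ℤ)).natAbs : ℝ) / (k : ℝ)) -
      max 0 (1 - (((i : ℤ) - (j : ℤ)).natAbs : ℝ) / (k : ℝ))) * Ω i j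

/-- Schur's test with the same bound for row sums and column sums. -/
lemma opNorm_le_of_sums {p : ℕ} (E : Matrix (Fin p) (Fin p) ℝ) (R : ℝ) (hR : 0 ≤ R)
    (hrow : ∀ i, ∑ j, |E i j| ≤ R) (hcol : ∀ j, ∑ i, |E i j| ≤ R) : opNorm E ≤ R := by
  unfold opNorm
  refine ContinuousLinearMap.opNorm_le_bound _ hR fun x => ?_
  refine le_of_sq_le_sq ?_ (by positivity)
  rw [mul_pow, EuclideanSpace.real_norm_sq_eq, EuclideanSpace.real_norm_sq_eq]
  have hentry : ∀ i, (∑ j, E i j * x j) ^ 2 ≤ R * ∑ j, |E i j| * x j ^ 2 := by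
    intro i
    have h := Finset.sum_sq_le_sum_mul_sum_of_sq_le_mul Finset.univ
      (r := fun j => E i j * x j) (f := fun j => |E i j|) (g := fun j => |E i j| * x j ^ 2)
      (fun j _ => abs_nonneg _) (fun j _ => by positivity)
      (fun j _ => le_of_eq (by rw [mul_pow, ← sq_abs (E i j)]; ring))
    refine h.trans (mul_le_mul_of_nonneg_right (hrow i) ?_)
    exact Finset.sum_nonneg fun j _ => by positivity
  calc ∑ i, ((LinearMap.toContinuousLinearMap (Matrix.toEuclideanLin E)) x) i ^ 2
      = ∑ i, (∑ j, E i j * x j) ^ 2 := by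
        refine Finset.sum_congr rfl fun i _ => ?_
        simp [Matrix.toLpLin_apply, Matrix.mulVec, dotProduct]
    _ ≤ ∑ i, R * ∑ j, |E i j| * x j ^ 2 := Finset.sum_le_sum fun i _ => hentry i
    _ = R * ∑ j, (∑ i, |E i j|) * x j ^ 2 := by
        rw [← Finset.mul_sum, Finset.sum_comm]
        simp_rw [Finset.sum_mul]
    _ ≤ R * ∑ j, R * x j ^ 2 := by
        gcongr with j
        exact hcol j
    _ = R ^ 2 * ∑ j, x j ^ 2 := by rw [← Finset.mul_sum]; ring

/-- Each distance `|i - j|` is attained by at most two indices `j`, one on each side of `i`. -/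
lemma sum_dist_le {p : ℕ} (f : ℕ → ℝ) (hf : ∀ n, 0 ≤ f n) (i : Fin p) :
    ∑ j : Fin p, f (((i : ℤ) - (j : ℤ)).natAbs) ≤ 2 * ∑ n ∈ Finset.range p, f n := by
  have key : ∀ s : Finset (Fin p),
      Set.InjOn (fun j : Fin p => ((i : ℤ) - (j : ℤ)).natAbs) (s : Set (Fin p)) →
      ∑ j ∈ s, f (((i : ℤ) - (j : ℤ)).natAbs) ≤ ∑ n ∈ Finset.range p, f n := by
    intro s hs
    rw [← Finset.sum_image (f := f) hs]
    refine Finset.sum_le_sum_of_subset_of_nonneg ?_ fun n _ _ => hf n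
    intro n hn
    obtain ⟨j, -, rfl⟩ := Finset.mem_image.1 hn
    have := i.2
    have := j.2
    simp only [Finset.mem_range]
    omega
  rw [← Finset.sum_filter_add_sum_filter_not Finset.univ (fun j : Fin p => (j : ℕ) ≤ (i : ℕ)),
    two_mul]
  refine add_le_add (key _ ?_) (key _ ?_)
  all_goals
    intro a ha b hb hab
    simp only [Finset.coe_filter, Finset.mem_univ, true_and, Set.mem_ofPred_eq] at ha hb hab
    exact Fin.ext (by omega)

/-- The decay profile `max(1, n)^(-α-1)`, the maximum giving the value `1` at `n = 0`. -/
noncomputable def decay (α : ℝ) (n : ℕ) : ℝ := ((max 1 n : ℕ) : ℝ) ^ (-α - 1)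

lemma decay_nonneg (α : ℝ) (n : ℕ) : 0 ≤ decay α n := by unfold decay; positivity

lemma decay_zero (α : ℝ) : decay α 0 = 1 := by simp [decay]

lemma decay_of_pos (α : ℝ) {n : ℕ} (hn : 1 ≤ n) : decay α n = (n : ℝ) ^ (-α - 1) := by
  rw [decay, max_eq_right hn]

lemma decay_anti {α : ℝ} (hα : 0 < α) {m n : ℕ} (h : m ≤ n) : decay α n ≤ decay α m := by
  unfold decay
  apply Real.rpow_le_rpow_of_nonpos
  · exact_mod_cast lt_of_lt_of_le one_pos (le_max_left 1 m)
  · exact_mod_cast max_le_max le_rfl h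
  · linarith

lemma decay_summable {α : ℝ} (hα : 0 < α) : Summable (decay α) := by
  rw [← summable_nat_add_iff 1]
  have h := (summable_nat_add_iff 1).2 (Real.summable_nat_rpow (p := -α - 1) |>.2 (by linarith))
  refine h.congr fun n => ?_
  rw [decay_of_pos α (by omega)]

/-- The telescoping bound behind the tail estimate, in place of a comparison with an integral. -/
lemma rpow_telescope {α : ℝ} (hα : 0 < α) {n : ℕ} (hn : 1 ≤ n) :
    α * ((n + 1 : ℕ) : ℝ) ^ (-α - 1) ≤ (n : ℝ) ^ (-α) - ((n + 1 : ℕ) : ℝ) ^ (-α) := by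
  have hn0 : (0 : ℝ) < n := by exact_mod_cast hn
  push_cast
  set x : ℝ := (n : ℝ)
  have hx1 : 0 < x + 1 := by linarith
  have hq : 0 < x / (x + 1) := by positivity
  -- `(x / (x+1))^(-α) = exp (-α log (x / (x+1))) ≥ 1 + α / (x+1)`, by `1 + t ≤ exp t` and
  -- `log t ≤ t - 1`.
  have h1 : 1 + α / (x + 1) ≤ (x / (x + 1)) ^ (-α) := by
    rw [Real.rpow_def_of_pos hq]
    have h2 := Real.add_one_le_exp (Real.log (x / (x + 1)) * -α)
    have h3 := Real.log_le_sub_one_of_pos hq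
    have h4 : x / (x + 1) - 1 = -(1 / (x + 1)) := by field_simp; ring
    rw [h4] at h3
    have h5 : α * Real.log (x / (x + 1)) ≤ α * -(1 / (x + 1)) :=
      mul_le_mul_of_nonneg_left h3 hα.le
    have h6 : α * -(1 / (x + 1)) = -(α / (x + 1)) := by ring
    linarith
  rw [Real.div_rpow hn0.le hx1.le, le_div_iff₀ (by positivity)] at h1
  rw [Real.rpow_sub_one hx1.ne']
  have h7 : α * ((x + 1) ^ (-α) / (x + 1)) = α / (x + 1) * (x + 1) ^ (-α) := by ring
  linarith

/-- The profile `decay α` cut off to distances `> k`. -/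
noncomputable def tail (α : ℝ) (k n : ℕ) : ℝ := if k < n then decay α n else 0

lemma tail_nonneg (α : ℝ) (k n : ℕ) : 0 ≤ tail α k n := by
  unfold tail
  split_ifs
  exacts [decay_nonneg α n, le_rfl]

lemma sum_tail_le {α : ℝ} (hα : 0 < α) {k : ℕ} (hk : 1 ≤ k) (N : ℕ) :
    ∑ n ∈ Finset.range N, tail α k n ≤ (k : ℝ) ^ (-α) / α := by
  have key : ∀ N : ℕ, α * ∑ n ∈ Finset.range (N + 1), tail α k n ≤
      (k : ℝ) ^ (-α) - ((max k N : ℕ) : ℝ) ^ (-α) := by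
    intro N
    induction N with
    | zero => simp [tail]
    | succ N ih =>
      rw [Finset.sum_range_succ, mul_add]
      by_cases h : k < N + 1
      · rw [max_eq_right (by omega)] at ih
        rw [max_eq_right h.le, tail, if_pos h, decay_of_pos α (by omega)]
        have := rpow_telescope hα (n := N) (by omega)
        linarith
      · rw [max_eq_left (by omega)] at ih ⊢
        rw [tail, if_neg h]
        linarith
  have hmono : ∑ n ∈ Finset.range N, tail α k n ≤ ∑ n ∈ Finset.range (N + 1), tail α k n := by
    rw [Finset.sum_range_succ]
    linarith [tail_nonneg α k N]
  rw [le_div_iff₀ hα]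
  have h1 := key N
  have h2 : (0 : ℝ) ≤ ((max k N : ℕ) : ℝ) ^ (-α) := by positivity
  nlinarith

lemma abs_one_sub_le {α M : ℝ} (hM : 0 < M) {p : ℕ} (A : Matrix (Fin p) (Fin p) ℝ)
    (hA0 : ∀ i j : Fin p, i ≤ j → A i j = 0)
    (hA : ∀ i j : Fin p, (j : ℕ) < (i : ℕ) →
      |A i j| ≤ M * ((((i : ℕ) - (j : ℕ) : ℕ)) : ℝ) ^ (-α - 1)) (i j : Fin p) :
    |(1 - A) i j| ≤ if j ≤ i then (M + 1) * decay α (((j : ℤ) - (i : ℤ)).natAbs) else 0 := by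
  rw [Matrix.sub_apply]
  rcases lt_trichotomy i j with h | h | h
  · rw [hA0 i j h.le, Matrix.one_apply_ne h.ne, if_neg (not_le.2 h)]
    simp
  · subst h
    rw [hA0 i i le_rfl]
    simp [decay_zero, hM.le]
  · rw [Matrix.one_apply_ne h.ne', if_pos h.le, zero_sub, abs_neg]
    have hji : (j : ℕ) < i := h
    have hn : (((j : ℤ) - (i : ℤ)).natAbs) = (i : ℕ) - j := by omega
    rw [hn]
    refine (hA i j hji).trans ?_
    rw [← decay_of_pos α (by omega)]
    nlinarith [decay_nonneg α ((i : ℕ) - j)]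

lemma abs_omega_le {α M η : ℝ} (hα : 0 < α) (hM : 0 < M) (hη : 1 < η) {p : ℕ}
    (A : Matrix (Fin p) (Fin p) ℝ)
    (hA0 : ∀ i j : Fin p, i ≤ j → A i j = 0)
    (hA : ∀ i j : Fin p, (j : ℕ) < (i : ℕ) →
      |A i j| ≤ M * ((((i : ℕ) - (j : ℕ) : ℕ)) : ℝ) ^ (-α - 1))
    (d : Fin p → ℝ) (hd : ∀ i, d i ∈ Set.Icc η⁻¹ η) (i j : Fin p) :
    |((1 - A)ᵀ * Matrix.diagonal (fun i => (d i)⁻¹) * (1 - A) :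
      Matrix (Fin p) (Fin p) ℝ) i j| ≤
      (η * (M + 1) ^ 2 * (4 * ∑' n, decay α n)) * decay α (((i : ℤ) - (j : ℤ)).natAbs) := by
  set w := decay α
  set n := (((i : ℤ) - (j : ℤ)).natAbs)
  have hw := decay_nonneg α
  have hη0 : 0 < η := by linarith
  have hsum : ∀ a : Fin p, ∑ l : Fin p, w (((a : ℤ) - (l : ℤ)).natAbs) ≤ 2 * ∑' n, w n := by
    intro a
    refine (sum_dist_le w hw a).trans ?_
    have := (decay_summable hα).sum_le_tsum (Finset.range p) fun n _ => hw n
    linarith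
  have hterm : ∀ l : Fin p, |(1 - A) l i * (d l)⁻¹ * (1 - A) l j| ≤
      η * (M + 1) ^ 2 * w n *
        (w (((i : ℤ) - (l : ℤ)).natAbs) + w (((j : ℤ) - (l : ℤ)).natAbs)) := by
    intro l
    have h1 := abs_one_sub_le hM A hA0 hA l i
    have h2 := abs_one_sub_le hM A hA0 hA l j
    have hdl := (hd l).1
    have hdpos : 0 < d l := lt_of_lt_of_le (inv_pos.2 hη0) hdl
    have hdinv : |(d l)⁻¹| ≤ η := by
      rw [abs_of_pos (inv_pos.2 hdpos)]
      exact inv_le_of_inv_le₀ hη0 hdl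
    rw [abs_mul, abs_mul]
    have hwi := hw (((i : ℤ) - (l : ℤ)).natAbs)
    have hwj := hw (((j : ℤ) - (l : ℤ)).natAbs)
    have hwn := hw n
    have hrhs : 0 ≤ η * (M + 1) ^ 2 * w n *
        (w (((i : ℤ) - (l : ℤ)).natAbs) + w (((j : ℤ) - (l : ℤ)).natAbs)) := by positivity
    by_cases hi : i ≤ l
    swap
    · rw [if_neg hi] at h1
      rw [le_antisymm h1 (abs_nonneg _)]
      simpa using hrhs
    by_cases hj : j ≤ l
    swap
    · rw [if_neg hj] at h2
      rw [le_antisymm h2 (abs_nonneg _)]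
      simpa using hrhs
    rw [if_pos hi] at h1
    rw [if_pos hj] at h2
    have hi' : (i : ℕ) ≤ l := hi
    have hj' : (j : ℕ) ≤ l := hj
    have hprod : w (((i : ℤ) - (l : ℤ)).natAbs) * w (((j : ℤ) - (l : ℤ)).natAbs) ≤
        w n * (w (((i : ℤ) - (l : ℤ)).natAbs) + w (((j : ℤ) - (l : ℤ)).natAbs)) := by
      -- the index farther from `l` is at distance at least `|i - j|` from it
      rcases le_total (i : ℕ) (j : ℕ) with hij | hij
      · have : w (((i : ℤ) - (l : ℤ)).natAbs) ≤ w n := decay_anti hα (by omega)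
        nlinarith [mul_nonneg hwn hwi]
      · have : w (((j : ℤ) - (l : ℤ)).natAbs) ≤ w n := decay_anti hα (by omega)
        nlinarith [mul_nonneg hwn hwj]
    calc |(1 - A) l i| * |(d l)⁻¹| * |(1 - A) l j|
        ≤ ((M + 1) * w (((i : ℤ) - (l : ℤ)).natAbs)) * η *
          ((M + 1) * w (((j : ℤ) - (l : ℤ)).natAbs)) := by
          gcongr
      _ = η * (M + 1) ^ 2 *
          (w (((i : ℤ) - (l : ℤ)).natAbs) * w (((j : ℤ) - (l : ℤ)).natAbs)) := by ring
      _ ≤ η * (M + 1) ^ 2 *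
          (w n * (w (((i : ℤ) - (l : ℤ)).natAbs) + w (((j : ℤ) - (l : ℤ)).natAbs))) := by
          gcongr
      _ = _ := by ring
  have hexp : ((1 - A)ᵀ * Matrix.diagonal (fun i => (d i)⁻¹) * (1 - A) :
      Matrix (Fin p) (Fin p) ℝ) i j =
      ∑ l, (1 - A) l i * (d l)⁻¹ * (1 - A) l j := by
    rw [Matrix.mul_apply]
    simp only [Matrix.mul_diagonal, Matrix.transpose_apply]
  rw [hexp]
  refine (Finset.abs_sum_le_sum_abs _ _).trans ((Finset.sum_le_sum fun l _ => hterm l).trans ?_)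
  rw [← Finset.mul_sum, Finset.sum_add_distrib]
  have hwn := hw n
  calc _ ≤ η * (M + 1) ^ 2 * w n * (2 * ∑' n, w n + 2 * ∑' n, w n) := by
        gcongr
        exacts [hsum i, hsum j]
    _ = _ := by ring

/-- The taper weight is `1` at distances `≤ k` and lies in `[0, 1]` everywhere. -/
lemma abs_taper_sub_le {α : ℝ} {p : ℕ} (Ω : Matrix (Fin p) (Fin p) ℝ) (K : ℝ)
    (hΩ : ∀ i j : Fin p, |Ω i j| ≤ K * decay α (((i : ℤ) - (j : ℤ)).natAbs))
    {k : ℕ} (hk : 1 ≤ k) (i j : Fin p) :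
    |(taper k Ω - Ω) i j| ≤ K * tail α k (((i : ℤ) - (j : ℤ)).natAbs) := by
  rw [Matrix.sub_apply, taper, Matrix.of_apply]
  have hb := hΩ i j
  set n := (((i : ℤ) - (j : ℤ)).natAbs)
  have hk0 : (0 : ℝ) < k := by exact_mod_cast hk
  unfold tail
  split_ifs with h
  · have h1 : (1 : ℝ) ≤ (n : ℝ) / k := by
      rw [le_div_iff₀ hk0, one_mul]
      exact_mod_cast h.le
    have h2 : max 0 (1 - (n : ℝ) / k) = 0 := max_eq_left (by linarith)
    rw [h2, sub_zero]
    set m := max 0 (2 - (n : ℝ) / k)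
    have hm0 : 0 ≤ m := le_max_left _ _
    have hm1 : m ≤ 1 := max_le zero_le_one (by linarith)
    have h3 : m * Ω i j - Ω i j = (m - 1) * Ω i j := by ring
    rw [h3, abs_mul]
    have h4 : |m - 1| ≤ 1 := abs_le.2 ⟨by linarith, by linarith⟩
    exact (mul_le_of_le_one_left (abs_nonneg _) h4).trans hb
  · have h1 : (n : ℝ) / k ≤ 1 := by
      rw [div_le_iff₀ hk0, one_mul]
      exact_mod_cast not_lt.1 h
    rw [max_eq_right (by linarith), max_eq_right (by linarith)]
    have h3 : (2 - (n : ℝ) / k - (1 - (n : ℝ) / k)) * Ω i j - Ω i j = 0 := by ring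
    rw [h3]
    simp

theorem stmt9 (α M η : ℝ) (hα : 0 < α) (hM : 0 < M) (hη : 1 < η) :
    ∃ C : ℝ, 0 < C ∧
      ∀ (p : ℕ), 1 ≤ p →
      ∀ A : Matrix (Fin p) (Fin p) ℝ,
        (∀ i j : Fin p, i ≤ j → A i j = 0) →
        (∀ i j : Fin p, (j : ℕ) < (i : ℕ) →
          |A i j| ≤ M * ((((i : ℕ) - (j : ℕ) : ℕ)) : ℝ) ^ (-α - 1)) →
      ∀ d : Fin p → ℝ, (∀ i, d i ∈ Set.Icc η⁻¹ η) →
      ∀ k : ℕ, 1 ≤ k → k ≤ p →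
        opNorm (taper k ((1 - A)ᵀ * Matrix.diagonal (fun i => (d i)⁻¹) * (1 - A)) -
            (1 - A)ᵀ * Matrix.diagonal (fun i => (d i)⁻¹) * (1 - A)) ^ 2 ≤
          C * (k : ℝ) ^ (-(2 * α)) := by
  have hW : 0 < ∑' n, decay α n :=
    (decay_summable hα).tsum_pos (decay_nonneg α) 0 (by rw [decay_zero]; exact one_pos)
  set K := η * (M + 1) ^ 2 * (4 * ∑' n, decay α n) with hK
  have hK0 : 0 < K := by positivity
  refine ⟨(2 * K / α) ^ 2, by positivity, ?_⟩
  intro p _ A hA0 hA d hd k hk _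
  set Ω := (1 - A)ᵀ * Matrix.diagonal (fun i => (d i)⁻¹) * (1 - A) with hΩdef
  have hE := abs_taper_sub_le Ω K (abs_omega_le hα hM hη A hA0 hA d hd) hk
  have hrow : ∀ i : Fin p, ∑ j : Fin p, K * tail α k (((i : ℤ) - (j : ℤ)).natAbs) ≤
      2 * K / α * (k : ℝ) ^ (-α) := by
    intro i
    rw [← Finset.mul_sum]
    calc _ ≤ K * (2 * ((k : ℝ) ^ (-α) / α)) := by
          gcongr
          refine (sum_dist_le _ (tail_nonneg α k) i).trans ?_
          gcongr
          exact sum_tail_le hα hk p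
      _ = _ := by ring
  have hop : opNorm (taper k Ω - Ω) ≤ 2 * K / α * (k : ℝ) ^ (-α) := by
    refine opNorm_le_of_sums _ _ (by positivity) (fun i => ?_) fun j => ?_
    · exact (Finset.sum_le_sum fun j _ => hE i j).trans (hrow i)
    · refine (Finset.sum_le_sum fun i _ => hE i j).trans (le_trans (le_of_eq ?_) (hrow j))
      refine Finset.sum_congr rfl fun i _ => ?_
      rw [← Int.natAbs_neg, neg_sub]
  have hpow : (k : ℝ) ^ (-(2 * α)) = ((k : ℝ) ^ (-α)) ^ 2 := by
    rw [← Real.rpow_mul_natCast (by positivity)]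
    congr 1
    push_cast
    ring
  rw [hpow, ← mul_pow]
  exact pow_le_pow_left₀ (norm_nonneg _) hop 2
end

section
/- Let n, k, p be positive integers with 2k ≤ p and let τ > 0. For θ = (θ₁, ..., θ_k) ∈ {0,1}^k define the real p×p matrix A(θ) by A(θ)_{k+i, k} = τ n^{−1/2} θ_i for i ∈ {1, ..., k} and all other entries 0, and set Ω(θ) = (I − A(θ))ᵀ (I − A(θ)). Then for all θ, θ′ ∈ {0,1}^k, ‖Ω(θ) − Ω(θ′)‖₂² ≥ H(θ, θ′) · τ² / n. -/
/-!
The operator norm of `Ω(θ) - Ω(θ')` dominates the Euclidean norm of its `k`-th column, the image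
of a unit vector. Since `A(θ)` is supported on that one column, the term `A(θ)ᵀ A(θ)` only touches
the diagonal entry `(k, k)`, and `A(θ)ᵀ` only touches row `k`. Hence the entries of the column in
rows `k + 1, …, 2k` are exactly `-τ n^{-1/2} (θ_i - θ'_i)`, whose squares sum to
`H(θ, θ') τ² / n`, because `(θ_i - θ'_i)² = |θ_i - θ'_i|` for binary sequences.
-/

open scoped BigOperators
open Matrix

/-- Each column of a matrix has Euclidean norm at most the operator norm. -/
lemma sum_sq_col_le_opNorm_sq {p : ℕ} (M : Matrix (Fin p) (Fin p) ℝ) (c : Fin p) :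
    ∑ r, M r c ^ 2 ≤ opNorm M ^ 2 := by
  have h := (LinearMap.toContinuousLinearMap (Matrix.toEuclideanLin M)).le_opNorm
    (EuclideanSpace.single c (1 : ℝ))
  rw [PiLp.norm_single, norm_one, mul_one] at h
  have h2 : ‖LinearMap.toContinuousLinearMap (Matrix.toEuclideanLin M)
      (EuclideanSpace.single c (1 : ℝ))‖ ^ 2 = ∑ r, M r c ^ 2 := by
    rw [EuclideanSpace.norm_sq_eq]
    refine Finset.sum_congr rfl fun r _ => ?_
    simp [Matrix.toLpLin_apply]
  rw [← h2]
  exact pow_le_pow_left₀ (norm_nonneg _) h 2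

/-- If column `r` of `A` vanishes, then row `r` of `(1 - A)ᵀ (1 - A)` is row `r` of `1 - A`. -/
lemma gram_apply_of_col_eq_zero {p : ℕ} (A : Matrix (Fin p) (Fin p) ℝ) (r c : Fin p)
    (h : ∀ s, A s r = 0) :
    ((1 - A)ᵀ * (1 - A) : Matrix (Fin p) (Fin p) ℝ) r c =
      (1 : Matrix (Fin p) (Fin p) ℝ) r c - A r c := by
  simp [Matrix.mul_apply, h, Matrix.one_apply]

theorem stmt15 (n k p : ℕ) (hn : 0 < n) (hk : 0 < k) (hp : 0 < p) (hkp : 2 * k ≤ p)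
    (τ : ℝ) (hτ : 0 < τ)
    (θ θ' : Fin k → ℝ) (hθ : ∀ i, θ i = 0 ∨ θ i = 1) (hθ' : ∀ i, θ' i = 0 ∨ θ' i = 1)
    (A A' : Matrix (Fin p) (Fin p) ℝ)
    (hA : ∀ r c : Fin p, A r c =
      ∑ i : Fin k,
        if (r : ℕ) = k + (i : ℕ) ∧ (c : ℕ) + 1 = k
          then τ * (n : ℝ) ^ (-(1 : ℝ) / 2) * θ i else 0)
    (hA' : ∀ r c : Fin p, A' r c =
      ∑ i : Fin k,
        if (r : ℕ) = k + (i : ℕ) ∧ (c : ℕ) + 1 = k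
          then τ * (n : ℝ) ^ (-(1 : ℝ) / 2) * θ' i else 0) :
    (∑ i, |θ i - θ' i|) * τ ^ 2 / (n : ℝ) ≤
      opNorm ((1 - A)ᵀ * (1 - A) - (1 - A')ᵀ * (1 - A')) ^ 2 := by
  let c : Fin p := ⟨k - 1, by omega⟩
  -- Indices start at 0: `c` is the `k`-th column, and `e` lists rows `k + 1, …, 2k`.
  let e : Fin k → Fin p := fun i => ⟨k + i, by omega⟩
  have he : Function.Injective e := by
    intro i j hij
    have := congrArg Fin.val hij
    simp only [e] at this
    exact Fin.ext (by omega)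
  have col_zero : ∀ (t : Fin k → ℝ) (B : Matrix (Fin p) (Fin p) ℝ),
      (∀ r c : Fin p, B r c = ∑ i : Fin k,
        if (r : ℕ) = k + (i : ℕ) ∧ (c : ℕ) + 1 = k
          then τ * (n : ℝ) ^ (-(1 : ℝ) / 2) * t i else 0) →
      ∀ i s, B s (e i) = 0 := by
    intro t B hB i s
    rw [hB]
    refine Finset.sum_eq_zero fun j _ => if_neg ?_
    simp only [e]
    omega
  have col_val : ∀ (t : Fin k → ℝ) (B : Matrix (Fin p) (Fin p) ℝ),
      (∀ r c : Fin p, B r c = ∑ i : Fin k,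
        if (r : ℕ) = k + (i : ℕ) ∧ (c : ℕ) + 1 = k
          then τ * (n : ℝ) ^ (-(1 : ℝ) / 2) * t i else 0) →
      ∀ i, B (e i) c = τ * (n : ℝ) ^ (-(1 : ℝ) / 2) * t i := by
    intro t B hB i
    rw [hB, Finset.sum_eq_single i]
    · exact if_pos ⟨rfl, by simp only [c]; omega⟩
    · intro j _ hj
      refine if_neg fun h => hj (Fin.ext ?_)
      have := h.1
      simp only [e] at this
      omega
    · simp
  have hpow : ((n : ℝ) ^ (-(1 : ℝ) / 2)) ^ 2 = (n : ℝ)⁻¹ := by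
    rw [← Real.rpow_natCast, ← Real.rpow_mul (Nat.cast_nonneg n)]
    norm_num [Real.rpow_neg_one]
  set M := (1 - A)ᵀ * (1 - A) - (1 - A')ᵀ * (1 - A') with hM
  have hentry : ∀ i, M (e i) c ^ 2 = |θ i - θ' i| * (τ ^ 2 / n) := by
    intro i
    have hbin : (θ i - θ' i) ^ 2 = |θ i - θ' i| := by
      rcases hθ i with h | h <;> rcases hθ' i with h' | h' <;> simp [h, h']
    rw [hM, Matrix.sub_apply, gram_apply_of_col_eq_zero A _ _ (col_zero θ A hA i),
      gram_apply_of_col_eq_zero A' _ _ (col_zero θ' A' hA' i), col_val θ A hA,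
      col_val θ' A' hA', ← hbin, div_eq_mul_inv (τ ^ 2), ← hpow]
    ring
  calc (∑ i, |θ i - θ' i|) * τ ^ 2 / (n : ℝ)
      = ∑ i, M (e i) c ^ 2 := by
        simp_rw [hentry, ← Finset.sum_mul, mul_div_assoc]
    _ = ∑ r ∈ Finset.univ.map ⟨e, he⟩, M r c ^ 2 := by simp
    _ ≤ ∑ r, M r c ^ 2 :=
        Finset.sum_le_sum_of_subset_of_nonneg (Finset.subset_univ _) fun _ _ _ => sq_nonneg _
    _ ≤ opNorm M ^ 2 := sum_sq_col_le_opNorm_sq M c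
end

section
/- Let n, k, p be positive integers with 2k ≤ p and let τ > 0. For θ = (θ₁, ..., θ_k) ∈ {0,1}^k define the real p×p matrix B(θ) by B(θ)_{k+i, j} = τ (nk)^{−1/2} θ_i for all i, j ∈ {1, ..., k} and all other entries 0, and set Ω(θ) = (I − B(θ))ᵀ (I − B(θ)). Then for all θ, θ′ ∈ {0,1}^k, ‖Ω(θ) − Ω(θ′)‖₂² ≥ H(θ, θ′) · τ² / n. -/
/-!
Test the difference `D = Ω(θ) - Ω(θ')` on the indicator vector `v` of the first `k` coordinates,
for which `‖v‖² = k`. Columns `k + 1, …, 2k` of `B(θ)` vanish, so row `k + i` of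
`(I - B)ᵀ (I - B)` is row `k + i` of `I - B`; on the first `k` columns it is constantly
`-a θ_i`, where `a = τ (nk)^{-1/2}` (`gram_row`). Hence `(D v)_{k+i} = -a k (θ_i - θ'_i)`, so that
`‖D v‖² ≥ a² k² H(θ, θ') = k · H(θ, θ') τ² / n`, and dividing by `‖v‖² = k` gives the bound.
-/

open scoped BigOperators
open Matrix

/-- In the lower-left block, with rows `k + i` and columns `c < k`, the matrix `(1 - B)ᵀ * (1 - B)`
coincides with `-B`, since column `k + i` of `B` is zero. -/
theorem gram_row {k p : ℕ} (a : ℝ) (θ : Fin k → ℝ) (B : Matrix (Fin p) (Fin p) ℝ)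
    (hB : ∀ r c : Fin p, B r c =
      ∑ i : Fin k, if (r : ℕ) = k + (i : ℕ) ∧ (c : ℕ) < k then a * θ i else 0)
    (i : Fin k) (r c : Fin p) (hr : (r : ℕ) = k + i) (hc : (c : ℕ) < k) :
    ((1 - B)ᵀ * (1 - B) : Matrix (Fin p) (Fin p) ℝ) r c = -(a * θ i) := by
  have hcol : ∀ s, B s r = 0 := by
    intro s
    rw [hB]
    exact Finset.sum_eq_zero fun j _ => if_neg (by omega)
  have hrow : B r c = a * θ i := by
    rw [hB, Finset.sum_eq_single i]
    · simp [hr, hc]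
    · intro j _ hj
      exact if_neg fun h => hj (Fin.ext (by omega))
    · simp
  have hne : r ≠ c := by
    intro h
    rw [h] at hr
    omega
  simp [Matrix.mul_apply, Matrix.one_apply, hcol, hrow, hne]

/-- Lower bound for the operator norm by testing on the indicator vector of the first `k`
coordinates and keeping only the coordinates in the range of `e` of the image. -/
theorem sum_sq_le_opNorm {k p : ℕ} (hkp : k ≤ p) (D : Matrix (Fin p) (Fin p) ℝ)
    (e : Fin k ↪ Fin p) (d : Fin k → ℝ)
    (hD : ∀ (i : Fin k) (c : Fin p), (c : ℕ) < k → D (e i) c = d i) :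
    ∑ i, (k * d i) ^ 2 ≤ opNorm D ^ 2 * k := by
  have hcard : (∑ c : Fin p, if (c : ℕ) < k then (1 : ℝ) else 0) = k := by
    rw [Fin.sum_univ_eq_sum_range (fun c => if c < k then (1 : ℝ) else 0) p,
      ← Finset.sum_filter]
    have : (Finset.range p).filter (· < k) = Finset.range k := by
      ext c
      simp only [Finset.mem_filter, Finset.mem_range]
      omega
    simp [this]
  set v : EuclideanSpace ℝ (Fin p) :=
    WithLp.toLp 2 fun c : Fin p => if (c : ℕ) < k then (1 : ℝ) else 0 with hv
  have hvn : ‖v‖ ^ 2 = k := by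
    rw [EuclideanSpace.real_norm_sq_eq, ← hcard]
    refine Finset.sum_congr rfl fun c _ => ?_
    simp [hv]
  have hDv : ∀ i, (Matrix.toEuclideanLin D v) (e i) = k * d i := by
    intro i
    rw [← hcard, Finset.sum_mul]
    change ∑ c, D (e i) c * (if (c : ℕ) < k then (1 : ℝ) else 0) = _
    refine Finset.sum_congr rfl fun c _ => ?_
    split_ifs with h
    · rw [hD i c h]; ring
    · ring
  have hle : ‖Matrix.toEuclideanLin D v‖ ≤ opNorm D * ‖v‖ :=
    (LinearMap.toContinuousLinearMap (Matrix.toEuclideanLin D)).le_opNorm v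
  calc ∑ i, (k * d i) ^ 2 = ∑ i, (Matrix.toEuclideanLin D v) (e i) ^ 2 := by simp only [hDv]
    _ = ∑ r ∈ Finset.univ.map e, (Matrix.toEuclideanLin D v) r ^ 2 := by rw [Finset.sum_map]
    _ ≤ ∑ r, (Matrix.toEuclideanLin D v) r ^ 2 :=
      Finset.sum_le_sum_of_subset_of_nonneg (Finset.subset_univ _) fun _ _ _ => sq_nonneg _
    _ = ‖Matrix.toEuclideanLin D v‖ ^ 2 := (EuclideanSpace.real_norm_sq_eq _).symm
    _ ≤ (opNorm D * ‖v‖) ^ 2 := pow_le_pow_left₀ (norm_nonneg _) hle 2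
    _ = opNorm D ^ 2 * k := by rw [mul_pow, hvn]

theorem stmt16 (n k p : ℕ) (hn : 0 < n) (hk : 0 < k) (hp : 0 < p) (hkp : 2 * k ≤ p)
    (τ : ℝ) (hτ : 0 < τ)
    (θ θ' : Fin k → ℝ) (hθ : ∀ i, θ i = 0 ∨ θ i = 1) (hθ' : ∀ i, θ' i = 0 ∨ θ' i = 1)
    (B B' : Matrix (Fin p) (Fin p) ℝ)
    (hB : ∀ r c : Fin p, B r c =
      ∑ i : Fin k,
        if (r : ℕ) = k + (i : ℕ) ∧ (c : ℕ) < k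
          then τ * ((n * k : ℕ) : ℝ) ^ (-(1 : ℝ) / 2) * θ i else 0)
    (hB' : ∀ r c : Fin p, B' r c =
      ∑ i : Fin k,
        if (r : ℕ) = k + (i : ℕ) ∧ (c : ℕ) < k
          then τ * ((n * k : ℕ) : ℝ) ^ (-(1 : ℝ) / 2) * θ' i else 0) :
    (∑ i, |θ i - θ' i|) * τ ^ 2 / (n : ℝ) ≤
      opNorm ((1 - B)ᵀ * (1 - B) - (1 - B')ᵀ * (1 - B')) ^ 2 := by
  set a : ℝ := τ * ((n * k : ℕ) : ℝ) ^ (-(1 : ℝ) / 2) with ha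
  have hn' : (0 : ℝ) < n := by exact_mod_cast hn
  have hk' : (0 : ℝ) < k := by exact_mod_cast hk
  have ha2 : a ^ 2 = τ ^ 2 / (n * k) := by
    rw [ha, mul_pow, ← Real.rpow_natCast, ← Real.rpow_natCast _ 2, ← Real.rpow_mul (by positivity)]
    norm_num [Real.rpow_neg_one]
    field_simp
  let e : Fin k ↪ Fin p := ⟨fun i => ⟨k + i, by omega⟩, fun i j h => by
    have := congrArg Fin.val h
    exact Fin.ext (by simpa using this)⟩
  have key := sum_sq_le_opNorm (by omega) ((1 - B)ᵀ * (1 - B) - (1 - B')ᵀ * (1 - B')) e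
    (fun i => -(a * (θ i - θ' i))) (by
      intro i c hc
      rw [Matrix.sub_apply, gram_row a θ B hB i (e i) c rfl hc,
        gram_row a θ' B' hB' i (e i) c rfl hc]
      ring)
  -- The entries of `θ - θ'` lie in `{-1, 0, 1}`, where absolute value and square agree.
  have habs : ∀ i, |θ i - θ' i| = (θ i - θ' i) ^ 2 := by
    intro i
    rcases hθ i with h | h <;> rcases hθ' i with h' | h' <;> simp [h, h']
  refine le_of_mul_le_mul_right (le_trans (le_of_eq ?_) key) hk'
  simp only [habs, mul_pow, neg_sq, ha2]
  rw [← Finset.mul_sum, ← Finset.mul_sum]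
  field_simp
end

section
/- Let a, σ be real numbers and λ > 0. Define the hard-thresholded value t = (a + σ)·1{|a + σ| > λ}. Then |t − a| ≤ min{|a|, (3/2)λ} + 3|σ|·1{|σ| > λ/2}. -/
/-! If `a + σ` survives the threshold, the error is `|σ|`; for `|σ| ≤ lam / 2` this is at most
`lam / 2 ≤ |a|`. If it is set to zero, the error is `|a| ≤ lam + |σ|`. The triangle inequality
then gives the bound in each of the four cases. -/

theorem stmt18 (a σ lam : ℝ) (hlam : 0 < lam) :
    |(if lam < |a + σ| then a + σ else 0) - a| ≤
      min |a| (3 / 2 * lam) + (if lam / 2 < |σ| then 3 * |σ| else 0) := by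
  have upper : |a + σ| ≤ |a| + |σ| := abs_add_le a σ
  have lower : |a| ≤ |a + σ| + |σ| := by
    simpa using abs_sub (a + σ) σ
  have ha := abs_nonneg a
  have hσ := abs_nonneg σ
  rw [← sub_le_iff_le_add]
  split_ifs with h₁ h₂ h₂ <;>
    simp only [add_sub_cancel_left, zero_sub, abs_neg] <;>
    exact le_min (by linarith) (by linarith)
end
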